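/- There is an absolute constant C such that for every α ∈ (0, 1/1000]: ‖Γ‖_{W^{7,∞}} ≤ C, ‖((1+R)²/R) Ω̄‖_{W^{7,∞}} + ‖((1+R)²/R) η̄‖_{W^{7,∞}} ≤ C α, and ‖D_β Ω̄‖_{W^{7,∞}} + ‖D_β η̄‖_{W^{7,∞}} ≤ C α². In particular Γ, Ω̄, η̄ all lie in W^{7,∞}. -/

import Mathlib

/-!
In the variable `u = 1/(1+R)` one has `D_R u = u² - u`, and in the variable `s = sin² β` one has
`D_β s = 4s(1-s)` and `D_β Γ = -2αsΓ`. Hence `D_R` and `D_β` act on functions of the form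
`K p(u) P(α,s) Γ(β)` through operators on the polynomials `p` and `P`, and both variables range
over `[0,1]`. Multiplication by the full angular weight `sin(2β)^{-α/5}/(α/10 + sin(2β))` keeps
`P(α,s) Γ` bounded, uniformly in `0 < α ≤ 10`, when `P` lies in the ideal `(αs, s(1-s))`. Every
`D_β^j Γ`, `j ≥ 1`, has `P ∈ (αs)`, while for `j ≥ 2` it has `P ∈ α(αs, s(1-s))`: this is the
additional factor `α` gained by `D_β Ω̄` and `D_β η̄`.
-/

open Real MeasureTheory Set

noncomputable section

namespace Paper

/-- The domain `(0,∞) × (0,π/2)` in the `(R,β)` variables. -/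
def Qdom : Set (ℝ × ℝ) := Set.Ioi (0:ℝ) ×ˢ Set.Ioo (0:ℝ) (Real.pi/2)

/-- Inner product `⟨f,g⟩ = ∫₀^∞ ∫₀^{π/2} f g dβ dR`. -/
def inner2 (f g : ℝ → ℝ → ℝ) : ℝ :=
  ∫ R in Set.Ioi (0:ℝ), ∫ β in Set.Ioo (0:ℝ) (Real.pi/2), f R β * g R β

/-- The `L²` norm `‖f‖₂`. -/
def norm2 (f : ℝ → ℝ → ℝ) : ℝ := Real.sqrt (inner2 f f)

/-- `‖h‖_{L²(R)}` for functions of `R` alone. -/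
def normR (h : ℝ → ℝ) : ℝ := Real.sqrt (∫ R in Set.Ioi (0:ℝ), (h R)^2)

/-- `D_R = R ∂_R`. -/
def DR (f : ℝ → ℝ → ℝ) : ℝ → ℝ → ℝ := fun R β => R * deriv (fun r => f r β) R

/-- `D_R` for functions of `R` alone. -/
def DR1 (h : ℝ → ℝ) : ℝ → ℝ := fun R => R * deriv h R

/-- `D_β = sin(2β) ∂_β`. -/
def Dbeta (f : ℝ → ℝ → ℝ) : ℝ → ℝ → ℝ :=
  fun R β => Real.sin (2*β) * deriv (fun b => f R b) β

/-- `L₁₂(Ω)(R) = ∫_R^∞ ∫₀^{π/2} Ω(s,β) sin(2β) s⁻¹ dβ ds`. -/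
def L12 (Ω : ℝ → ℝ → ℝ) (R : ℝ) : ℝ :=
  ∫ s in Set.Ioi R, ∫ β in Set.Ioo (0:ℝ) (Real.pi/2), Ω s β * Real.sin (2*β) / s

/-- `L̃₁₂(Ω)(R) = L₁₂(Ω)(R) − L₁₂(Ω)(0)`. -/
def tL12 (Ω : ℝ → ℝ → ℝ) (R : ℝ) : ℝ := L12 Ω R - L12 Ω 0

/-- Compact support contained in the open domain `(0,∞)×(0,π/2)`. -/
def suppIn (f : ℝ → ℝ → ℝ) : Prop :=
  ∃ K : Set (ℝ × ℝ), IsCompact K ∧ K ⊆ Qdom ∧ ∀ x y : ℝ, (x, y) ∉ K → f x y = 0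

/-- Integrability over the domain. -/
def Integrable2 (f : ℝ → ℝ → ℝ) : Prop :=
  MeasureTheory.IntegrableOn (Function.uncurry f) Qdom

/-- `Γ(β) = (cos β)^α`. -/
def Γf (α : ℝ) (β : ℝ) : ℝ := Real.cos β ^ α

/-- The normalizing constant `c = (2/π)∫₀^{π/2} Γ(β) sin(2β) dβ`. -/
def cst (α : ℝ) : ℝ :=
  (2/Real.pi) * ∫ β in Set.Ioo (0:ℝ) (Real.pi/2), Γf α β * Real.sin (2*β)

/-- The approximate profile `Ω̄`. -/
def Ωbar (α : ℝ) : ℝ → ℝ → ℝ := fun R β => (α / cst α) * Γf α β * (3*R/(1+R)^2)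

/-- The approximate profile `η̄`. -/
def ηbar (α : ℝ) : ℝ → ℝ → ℝ := fun R β => (α / cst α) * Γf α β * (6*R/(1+R)^3)

/-- The singular weight `φ₁ = (1+R)⁴R⁻⁴ sin(2β)^{-σ}`, `σ = 99/100`. -/
def phi1 : ℝ → ℝ → ℝ := fun R β => (1+R)^4 / R^4 * Real.sin (2*β) ^ (-(99/100 : ℝ))

/-- The singular weight `φ₂ = (1+R)⁴R⁻⁴ sin(2β)^{-γ}`, `γ = 1 + α/10`. -/
def phi2 (α : ℝ) : ℝ → ℝ → ℝ := fun R β => (1+R)^4 / R^4 * Real.sin (2*β) ^ (-(1 + α/10))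

/-- The singular weight `ψ₁ = (1+R)⁴R⁻⁴ (sin β cos β)^{-σ}`. -/
def psi1 : ℝ → ℝ → ℝ := fun R β =>
  (1+R)^4 / R^4 * (Real.sin β * Real.cos β) ^ (-(99/100 : ℝ))

/-- The singular weight `ψ₂ = (1+R)⁴R⁻⁴ (sin β)^{-σ}(cos β)^{-γ}`. -/
def psi2 (α : ℝ) : ℝ → ℝ → ℝ := fun R β =>
  (1+R)^4 / R^4 * Real.sin β ^ (-(99/100 : ℝ)) * Real.cos β ^ (-(1 + α/10))

/-- `c_ω = −(2/(πα)) L₁₂(Ω)(0)`. -/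
def cω (α : ℝ) (Ω : ℝ → ℝ → ℝ) : ℝ := -(2/(Real.pi*α)) * L12 Ω 0

/-- The linearized operator `L₁`. -/
def opL1 (α : ℝ) (Ω η : ℝ → ℝ → ℝ) : ℝ → ℝ → ℝ := fun R β =>
  - DR Ω R β - (3/(1+R)) * Dbeta Ω R β - Ω R β + η R β
  + cω α Ω * (Ωbar α R β - DR (Ωbar α) R β)

/-- The linearized operator `L₂`. -/
def opL2 (α : ℝ) (Ω η : ℝ → ℝ → ℝ) : ℝ → ℝ → ℝ := fun R β =>
  - DR η R β - (3/(1+R)) * Dbeta η R β + (-2 + 3/(1+R)) * η R β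
  + (2/(Real.pi*α)) * tL12 Ω R * ηbar α R β
  + cω α Ω * (ηbar α R β - DR (ηbar α) R β)

/-- `ξ̄` in Cartesian variables. -/
def ξbarC (α : ℝ) (x y : ℝ) : ℝ :=
  -(18*α^2 / cst α) * ∫ z in Set.Ioo (0:ℝ) x,
      (y/(y^2+z^2)) * (z ^ α * (z^2+y^2) ^ (α/2) / (1 + (z^2+y^2) ^ (α/2))^4)

/-- `ξ̄` in the `(R,β)` variables, via `x = R^{1/α} cos β`, `y = R^{1/α} sin β`. -/
def ξbar (α : ℝ) : ℝ → ℝ → ℝ := fun R β =>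
  ξbarC α (R ^ (1/α) * Real.cos β) (R ^ (1/α) * Real.sin β)

/-- The linearized operator `L₃`. -/
def opL3 (α : ℝ) (Ω ξ : ℝ → ℝ → ℝ) : ℝ → ℝ → ℝ := fun R β =>
  - DR ξ R β - (3/(1+R)) * Dbeta ξ R β + (-2 - 3/(1+R)) * ξ R β
  - (2/(Real.pi*α)) * tL12 Ω R * ξbar α R β
  + cω α Ω * (3 * ξbar α R β - DR (ξbar α) R β)

/-- Weighted Sobolev norm `H^m` with radial weight `w1` and angular weight `w2`:
`‖f‖ = Σ_{0≤k≤m} ‖(D_R^k f)√w1‖₂ + Σ_{i+j≤m−1} ‖(D_R^i D_β^{j+1} f)√w2‖₂`. -/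
def Hnorm (m : ℕ) (w1 w2 : ℝ → ℝ → ℝ) (f : ℝ → ℝ → ℝ) : ℝ :=
  (∑ k ∈ Finset.range (m+1),
    norm2 (fun R β => DR^[k] f R β * Real.sqrt (w1 R β)))
  + ∑ p ∈ (Finset.range (m+1) ×ˢ Finset.range (m+1)).filter
      (fun p => p.1 + p.2 + 1 ≤ m),
      norm2 (fun R β => DR^[p.1] (Dbeta^[p.2+1] f) R β * Real.sqrt (w2 R β))

/-- Sup of `|f|` over the domain `(0,∞)×(0,π/2)`. -/
def supDom (f : ℝ → ℝ → ℝ) : ℝ :=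
  ⨆ (R : Set.Ioi (0:ℝ)) (β : Set.Ioo (0:ℝ) (Real.pi/2)), |f R.1 β.1|

/-- The weighted `C¹` norm. -/
def C1norm (α : ℝ) (f : ℝ → ℝ → ℝ) : ℝ :=
  supDom f + supDom (fun R β => (1+R)/R * DR f R β)
  + supDom (fun R β =>
      (1 + (R * Real.sin (2*β) ^ α) ^ (-(1/40 : ℝ))) * Dbeta f R β)

/-- Boundedness of `f` on the domain. -/
def BddDom (f : ℝ → ℝ → ℝ) : Prop :=
  ∃ M : ℝ, ∀ R ∈ Set.Ioi (0:ℝ), ∀ β ∈ Set.Ioo (0:ℝ) (Real.pi/2), |f R β| ≤ M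

/-- Finiteness of the weighted `C¹` norm. -/
def C1Fin (α : ℝ) (f : ℝ → ℝ → ℝ) : Prop :=
  BddDom f ∧ BddDom (fun R β => (1+R)/R * DR f R β) ∧
  BddDom (fun R β => (1 + (R * Real.sin (2*β) ^ α) ^ (-(1/40 : ℝ))) * Dbeta f R β)

/-- The weighted `W^{l,∞}` norm. -/
def Wnorm (α : ℝ) (l : ℕ) (f : ℝ → ℝ → ℝ) : ℝ :=
  (∑ k ∈ Finset.range (l+1), supDom (DR^[k] f))
  + ∑ p ∈ (Finset.range (l+1) ×ˢ Finset.range (l+1)).filter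
      (fun p => p.1 + p.2 ≤ l ∧ 1 ≤ p.2),
      supDom (fun R β => Real.sin (2*β) ^ (-(α/5)) *
        DR^[p.1] (fun R' β' => Dbeta^[p.2] f R' β' / (α/10 + Real.sin (2*β'))) R β)

/-- Finiteness of the `W^{l,∞}` norm. -/
def WFin (α : ℝ) (l : ℕ) (f : ℝ → ℝ → ℝ) : Prop :=
  (∀ k ≤ l, BddDom (DR^[k] f)) ∧
  ∀ k j : ℕ, k + j ≤ l → 1 ≤ j →
    BddDom (fun R β => Real.sin (2*β) ^ (-(α/5)) *
      DR^[k] (fun R' β' => Dbeta^[j] f R' β' / (α/10 + Real.sin (2*β'))) R β)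

/-- `I(f)(x,y) = ∫₀ˣ f(z,y)/z dz`. -/
def Ifun (f : ℝ → ℝ → ℝ) : ℝ → ℝ → ℝ := fun x y => ∫ z in Set.Ioo (0:ℝ) x, f z y / z

/-- `D_S g = (1/α)(z ∂_z g + y ∂_y g)` in Cartesian variables. -/
def DScart (α : ℝ) (g : ℝ → ℝ → ℝ) : ℝ → ℝ → ℝ := fun a b =>
  (1/α) * (a * deriv (fun a' => g a' b) a + b * deriv (fun b' => g a b') b)

/-- `D_τ g = 2y ∂_y g − 2α (y²/(y²+z²)) D_S g` in Cartesian variables. -/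
def DTcart (α : ℝ) (g : ℝ → ℝ → ℝ) : ℝ → ℝ → ℝ := fun a b =>
  2*b * deriv (fun b' => g a b') b - 2*α*(b^2/(b^2+a^2)) * DScart α g a b

open Polynomial Asymptotics Filter

/-- The operator on `ℝ[X]` induced by `D_R` under the substitution `X = 1/(1+R)`. -/
def radialDeriv (p : ℝ[X]) : ℝ[X] := derivative p * (X ^ 2 - X)

/-- The operator on polynomials in `s = sin² β`, with coefficients polynomial in `α`, that `D_β`
induces on the factor `P(α, s)` of `P(α, s) Γ(β)`. The inner variable of `ℝ[X][X]` is `α`. -/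
def angularDeriv (P : ℝ[X][X]) : ℝ[X][X] := 4 * X * (1 - X) * derivative P - 2 * C X * X * P

/-- The angular function `P(α, sin² β) Γ(β)`. -/
def angularFun (P : ℝ[X][X]) (α β : ℝ) : ℝ := P.evalEval α (sin β ^ 2) * Γf α β

/-- The full weight `sin(2β)^{-α/5} / (α/10 + sin(2β))` on angular derivatives in `W^{l,∞}`. -/
def angularWeight (α β : ℝ) : ℝ := sin (2 * β) ^ (-(α / 5)) / (α / 10 + sin (2 * β))

/-- The ideal `(αs, s(1-s))` of polynomials whose angular functions absorb `angularWeight`. -/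
def weightIdeal : Ideal ℝ[X][X] := Ideal.span {C X * X, X * (1 - X)}

/-- The family `α ↦ f α` is `O(a α)` in every `W^{l,∞}`, uniformly over `α ∈ S`. -/
structure IsBigOW (S : Set ℝ) (f : ℝ → ℝ → ℝ → ℝ) (a : ℝ → ℝ) : Prop where
  radial (k : ℕ) :
    (fun x : ℝ × ℝ × ℝ => DR^[k] (f x.1) x.2.1 x.2.2) =O[𝓟 (S ×ˢ Qdom)] fun x => a x.1
  angular (k j : ℕ) :
    (fun x : ℝ × ℝ × ℝ => sin (2 * x.2.2) ^ (-(x.1 / 5)) *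
      DR^[k] (fun R β => Dbeta^[j + 1] (f x.1) R β / (x.1 / 10 + sin (2 * β))) x.2.1 x.2.2)
      =O[𝓟 (S ×ˢ Qdom)] fun x => a x.1

/-- On the domain, `f α` is the separated profile `K α · p(1/(1+R)) · Γ(β)`. -/
def IsProfile (K : ℝ → ℝ) (p : ℝ[X]) (f : ℝ → ℝ → ℝ → ℝ) : Prop :=
  ∀ α, ∀ R ∈ Ioi (0 : ℝ), ∀ β ∈ Ioo (0 : ℝ) (π / 2),
    f α R β = K α * p.eval (1 / (1 + R)) * Γf α β

section UniformBounds

variable {S : Set ℝ} {F f : ℝ → ℝ → ℝ → ℝ} {a : ℝ → ℝ}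

lemma isBigO_supDom
    (hF : (fun x : ℝ × ℝ × ℝ => F x.1 x.2.1 x.2.2) =O[𝓟 (S ×ˢ Qdom)] fun x => a x.1) :
    (fun α => supDom (F α)) =O[𝓟 S] a := by
  obtain ⟨M, hM, hbound⟩ := hF.exists_nonneg
  rw [isBigOWith_principal] at hbound
  refine isBigO_principal.2 ⟨M, fun α hα => ?_⟩
  have hMa : 0 ≤ M * ‖a α‖ := by positivity
  have hnonneg : 0 ≤ supDom (F α) :=
    Real.iSup_nonneg fun _ => Real.iSup_nonneg fun _ => abs_nonneg _
  rw [Real.norm_of_nonneg hnonneg]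
  exact Real.iSup_le (fun R => Real.iSup_le
    (fun β => hbound (α, R, β) ⟨hα, R.2, β.2⟩) hMa) hMa

lemma bddDom_of_isBigO
    (hF : (fun x : ℝ × ℝ × ℝ => F x.1 x.2.1 x.2.2) =O[𝓟 (S ×ˢ Qdom)] fun x => a x.1)
    {α : ℝ} (hα : α ∈ S) : BddDom (F α) := by
  obtain ⟨M, hM⟩ := isBigO_principal.1 hF
  exact ⟨M * ‖a α‖, fun R hR β hβ => hM (α, R, β) ⟨hα, hR, hβ⟩⟩

lemma IsBigOW.wFin (h : IsBigOW S f a) (l : ℕ) {α : ℝ} (hα : α ∈ S) : WFin α l (f α) := by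
  refine ⟨fun k _ => bddDom_of_isBigO (F := fun α => DR^[k] (f α)) (h.radial k) hα,
    fun k j _ hj => ?_⟩
  obtain ⟨i, rfl⟩ := Nat.exists_eq_add_of_le' hj
  exact bddDom_of_isBigO (F := fun α R β => sin (2 * β) ^ (-(α / 5)) *
    DR^[k] (fun R β => Dbeta^[i + 1] (f α) R β / (α / 10 + sin (2 * β))) R β) (h.angular k i) hα

lemma IsBigOW.wnorm (h : IsBigOW S f a) (l : ℕ) : (fun α => Wnorm α l (f α)) =O[𝓟 S] a := by
  refine (IsBigO.fun_sum fun k _ => isBigO_supDom (h.radial k)).add (IsBigO.fun_sum fun q hq => ?_)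
  obtain ⟨i, hi⟩ := Nat.exists_eq_add_of_le' (Finset.mem_filter.1 hq).2.2
  simp only [hi]
  exact isBigO_supDom (F := fun α R β => sin (2 * β) ^ (-(α / 5)) *
    DR^[q.1] (fun R β => Dbeta^[i + 1] (f α) R β / (α / 10 + sin (2 * β))) R β) (h.angular q.1 i)

end UniformBounds

section PolynomialOperators

lemma DR_iterate_eq_eval {f : ℝ → ℝ → ℝ} {p : ℝ[X]} {β c : ℝ}
    (hf : ∀ R ∈ Ioi (0 : ℝ), f R β = p.eval (1 / (1 + R)) * c) (k : ℕ) :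
    ∀ R ∈ Ioi (0 : ℝ), DR^[k] f R β = (radialDeriv^[k] p).eval (1 / (1 + R)) * c := by
  induction k with
  | zero => exact hf
  | succ k ih =>
    intro R hR
    have hne : 1 + R ≠ 0 := by linarith [mem_Ioi.1 hR]
    have hu : HasDerivAt (fun r : ℝ => 1 / (1 + r)) (-1 / (1 + R) ^ 2) R := by
      simp only [one_div]
      exact ((hasDerivAt_id R).const_add 1).inv hne
    have hp := (((radialDeriv^[k] p).hasDerivAt (1 / (1 + R))).comp R hu).mul_const c
    have hloc : (fun r => DR^[k] f r β) =ᶠ[nhds R] _ := eventually_of_mem (Ioi_mem_nhds hR) ih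
    have hderiv := hloc.deriv_eq.trans hp.deriv
    simp only [Function.iterate_succ_apply', DR, hderiv, radialDeriv, eval_mul, eval_sub, eval_pow,
      eval_X]
    field_simp
    ring

lemma cos_pos_of_mem_Ioo_zero {β : ℝ} (hβ : β ∈ Ioo 0 (π / 2)) : 0 < cos β :=
  cos_pos_of_mem_Ioo ⟨by linarith [hβ.1, pi_pos], hβ.2⟩

lemma hasDerivAt_angularFun (P : ℝ[X][X]) (α : ℝ) {β : ℝ} (hβ : β ∈ Ioo 0 (π / 2)) :
    HasDerivAt (angularFun P α)
      ((derivative P).evalEval α (sin β ^ 2) * (2 * sin β * cos β) * Γf α β +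
        P.evalEval α (sin β ^ 2) * (-sin β * α * cos β ^ (α - 1))) β := by
  have hsin : HasDerivAt (fun b => sin b ^ 2) (2 * sin β * cos β) β := by
    simpa only [Nat.cast_ofNat, Nat.add_one_sub_one, pow_one] using! (hasDerivAt_sin β).pow 2
  have hP := ((P.map (evalRingHom α)).hasDerivAt (sin β ^ 2)).comp β hsin
  have hΓ := (hasDerivAt_cos β).rpow_const (p := α) (Or.inl (cos_pos_of_mem_Ioo_zero hβ).ne')
  simp only [derivative_map, map_evalRingHom_eval] at hP
  refine (hP.mul hΓ).congr_of_eventuallyEq (.of_forall fun b => ?_)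
  simp [angularFun, Γf]

lemma sin_two_mul_mul_deriv_angularFun (P : ℝ[X][X]) (α : ℝ) {β : ℝ} (hβ : β ∈ Ioo 0 (π / 2)) :
    sin (2 * β) * deriv (angularFun P α) β = angularFun (angularDeriv P) α β := by
  have hΓ : Γf α β = cos β ^ (α - 1) * cos β := by
    rw [Γf, ← rpow_add_one (cos_pos_of_mem_Ioo_zero hβ).ne', sub_add_cancel]
  have hS : (angularDeriv P).evalEval α (sin β ^ 2) =
      4 * sin β ^ 2 * cos β ^ 2 * (derivative P).evalEval α (sin β ^ 2) -
        2 * α * sin β ^ 2 * P.evalEval α (sin β ^ 2) := by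
    rw [cos_sq']
    simp [angularDeriv, evalEval]
  rw [(hasDerivAt_angularFun P α hβ).deriv, angularFun, hS, sin_two_mul, hΓ]
  ring

lemma Dbeta_iterate_eq_angularFun {f : ℝ → ℝ → ℝ} {P : ℝ[X][X]} {α R c : ℝ}
    (hf : ∀ β ∈ Ioo 0 (π / 2), f R β = c * angularFun P α β) (j : ℕ) :
    ∀ β ∈ Ioo 0 (π / 2), Dbeta^[j] f R β = c * angularFun (angularDeriv^[j] P) α β := by
  induction j with
  | zero => exact hf
  | succ j ih =>
    intro β hβ
    have hloc : (fun b => Dbeta^[j] f R b) =ᶠ[nhds β] _ :=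
      eventually_of_mem (Ioo_mem_nhds hβ.1 hβ.2) ih
    simp only [Function.iterate_succ_apply', Dbeta, hloc.deriv_eq, deriv_const_mul_field]
    rw [mul_left_comm, sin_two_mul_mul_deriv_angularFun _ _ hβ]

lemma IsProfile.DR_iterate_Dbeta_iterate_div {K : ℝ → ℝ} {p : ℝ[X]} {f : ℝ → ℝ → ℝ → ℝ}
    (hf : IsProfile K p f) (w : ℝ → ℝ) (k j : ℕ) (α : ℝ) {R β : ℝ} (hR : R ∈ Ioi 0)
    (hβ : β ∈ Ioo 0 (π / 2)) :
    DR^[k] (fun R β => Dbeta^[j] (f α) R β / w β) R β =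
      K α * (radialDeriv^[k] p).eval (1 / (1 + R)) *
        (angularFun (angularDeriv^[j] 1) α β / w β) := by
  have hangular : ∀ r ∈ Ioi (0 : ℝ), Dbeta^[j] (f α) r β / w β =
      p.eval (1 / (1 + r)) * (K α * (angularFun (angularDeriv^[j] 1) α β / w β)) := by
    intro r hr
    rw [Dbeta_iterate_eq_angularFun (P := 1) (α := α) (c := K α * p.eval (1 / (1 + r)))
      (fun b hb => by simpa [angularFun] using hf α r hr b hb) j β hβ]
    ring
  rw [DR_iterate_eq_eval (f := fun R β => Dbeta^[j] (f α) R β / w β) hangular k R hR]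
  ring

lemma exists_angularDeriv_iterate_succ_one (j : ℕ) :
    ∃ Q : ℝ[X][X], angularDeriv^[j + 1] 1 = C X * (X * Q) := by
  induction j with
  | zero => exact ⟨-2, by simp [angularDeriv]; ring⟩
  | succ j ih =>
    obtain ⟨Q, hQ⟩ := ih
    refine ⟨4 * (1 - X) * (Q + X * derivative Q) - 2 * C X * X * Q, ?_⟩
    rw [Function.iterate_succ_apply', hQ]
    simp only [angularDeriv, derivative_mul, derivative_C, derivative_X]
    ring

lemma angularDeriv_iterate_succ_one_mem_weightIdeal (j : ℕ) :
    angularDeriv^[j + 1] 1 ∈ weightIdeal := by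
  obtain ⟨Q, hQ⟩ := exists_angularDeriv_iterate_succ_one j
  rw [hQ, ← mul_assoc]
  exact weightIdeal.mul_mem_right Q (Ideal.subset_span (by simp))

lemma exists_mem_weightIdeal_angularDeriv_iterate_add_two_one (j : ℕ) :
    ∃ P ∈ weightIdeal, angularDeriv^[j + 2] 1 = C X * P := by
  obtain ⟨Q, hQ⟩ := exists_angularDeriv_iterate_succ_one j
  refine ⟨_, Ideal.mem_span_pair.2 ⟨-2 * X * Q, 4 * (Q + X * derivative Q), rfl⟩, ?_⟩
  rw [Function.iterate_succ_apply', hQ]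
  simp only [angularDeriv, derivative_mul, derivative_C, derivative_X]
  ring

end PolynomialOperators

section AngularWeight

variable {α β : ℝ}

lemma sin_two_mul_pos (hβ : β ∈ Ioo 0 (π / 2)) : 0 < sin (2 * β) :=
  sin_pos_of_pos_of_lt_pi (by linarith [hβ.1]) (by linarith [hβ.2])

lemma Γf_nonneg (hβ : β ∈ Ioo 0 (π / 2)) : 0 ≤ Γf α β :=
  rpow_nonneg (cos_pos_of_mem_Ioo_zero hβ).le α

lemma Γf_le_one (hα : 0 ≤ α) (hβ : β ∈ Ioo 0 (π / 2)) : Γf α β ≤ 1 :=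
  rpow_le_one (cos_pos_of_mem_Ioo_zero hβ).le (cos_le_one β) hα

lemma sin_two_mul_rpow_mul_sin_sq_mul_Γf_le_one (hα : α ∈ Icc 0 10) (hβ : β ∈ Ioo 0 (π / 2)) :
    sin (2 * β) ^ (-(α / 5)) * (sin β ^ 2 * Γf α β) ≤ 1 := by
  have hcos := cos_pos_of_mem_Ioo_zero hβ
  have hsin : 0 < sin β := sin_pos_of_mem_Ioo ⟨hβ.1, by linarith [hβ.2, pi_pos]⟩
  have hΓ : 0 ≤ Γf α β := Γf_nonneg hβ
  have hprod : 0 < sin β * cos β := mul_pos hsin hcos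
  have hpow : sin (2 * β) ^ (-(α / 5)) ≤ (sin β * cos β) ^ (-(α / 5)) :=
    rpow_le_rpow_of_nonpos hprod (by linarith [sin_two_mul β]) (by linarith [hα.1])
  calc sin (2 * β) ^ (-(α / 5)) * (sin β ^ 2 * Γf α β)
      ≤ (sin β * cos β) ^ (-(α / 5)) * (sin β ^ 2 * Γf α β) := by gcongr
    _ = sin β ^ (-(α / 5) + 2) * cos β ^ (-(α / 5) + α) := by
      rw [mul_rpow hsin.le hcos.le, rpow_add hsin, rpow_add hcos, rpow_two, Γf]
      ring
    _ ≤ 1 := mul_le_one₀ (rpow_le_one hsin.le (sin_le_one β) (by linarith [hα.2]))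
      (rpow_nonneg hcos.le _) (rpow_le_one hcos.le (cos_le_one β) (by linarith [hα.1]))

lemma sin_two_mul_rpow_mul_sin_sq_mul_cos_sq_mul_Γf_le (hα : α ∈ Icc 0 10)
    (hβ : β ∈ Ioo 0 (π / 2)) :
    sin (2 * β) ^ (-(α / 5)) * (sin β ^ 2 * cos β ^ 2 * Γf α β) ≤ α / 10 + sin (2 * β) := by
  have hs := sin_two_mul_pos hβ
  have hs_le := sin_le_one (2 * β)
  have hamgm := geom_mean_le_arith_mean2_weighted (w₁ := α / 10) (w₂ := 1 - α / 10) (p₁ := 1)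
    (by linarith [hα.1]) (by linarith [hα.2]) zero_le_one hs.le (by ring)
  rw [one_rpow, one_mul, mul_one] at hamgm
  calc sin (2 * β) ^ (-(α / 5)) * (sin β ^ 2 * cos β ^ 2 * Γf α β)
      ≤ sin (2 * β) ^ (-(α / 5)) * (sin (2 * β) ^ 2 * 1) := by
        gcongr
        · exact Γf_nonneg hβ
        · rw [sin_two_mul]
          nlinarith [sq_nonneg (sin β * cos β)]
        · exact Γf_le_one hα.1 hβ
    _ = sin (2 * β) ^ (-(α / 5) + 2) := by rw [mul_one, rpow_add hs, rpow_two]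
    _ ≤ sin (2 * β) ^ (1 - α / 10) :=
      rpow_le_rpow_of_exponent_ge hs hs_le (by linarith [hα.2])
    _ ≤ α / 10 + (1 - α / 10) * sin (2 * β) := hamgm
    _ ≤ α / 10 + sin (2 * β) := by nlinarith [hα.1]

lemma angularFun_mul (P Q : ℝ[X][X]) (α β : ℝ) :
    angularFun (P * Q) α β = Q.evalEval α (sin β ^ 2) * angularFun P α β := by
  simp only [angularFun, evalEval_mul]
  ring

lemma angularFun_C_X_mul (P : ℝ[X][X]) (α β : ℝ) :
    angularFun (C X * P) α β = α * angularFun P α β := by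
  simp only [angularFun, evalEval_mul, evalEval_C, eval_X, mul_assoc]

lemma sin_sq_mem_Icc (β : ℝ) : sin β ^ 2 ∈ Icc (0 : ℝ) 1 := ⟨sq_nonneg _, sin_sq_le_one β⟩

lemma continuous_evalEval (P : ℝ[X][X]) : Continuous fun y : ℝ × ℝ => P.evalEval y.1 y.2 := by
  simp only [evalEval, eval_eq_sum_range (p := P), eval_finsetSum, eval_mul, eval_pow, eval_C]
  fun_prop

lemma isBigO_eval_inv_one_add (p : ℝ[X]) (S : Set ℝ) :
    (fun x : ℝ × ℝ × ℝ => p.eval (1 / (1 + x.2.1))) =O[𝓟 (S ×ˢ Qdom)] fun _ => (1 : ℝ) := by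
  refine (p.continuous.continuousOn.isBigO_principal (s := Icc 0 1) isCompact_Icc
    (by simp)).comp_tendsto (tendsto_principal_principal.2 fun x hx => ?_)
  have hR : 0 < x.2.1 := hx.2.1
  exact ⟨by positivity, by rw [div_le_one (by positivity)]; linarith⟩

lemma isBigO_evalEval_sin_sq (P : ℝ[X][X]) :
    (fun x : ℝ × ℝ × ℝ => P.evalEval x.1 (sin x.2.2 ^ 2)) =O[𝓟 (Ioc 0 10 ×ˢ Qdom)]
      fun _ => (1 : ℝ) :=
  ((continuous_evalEval P).continuousOn.isBigO_principal
    ((isCompact_Icc (a := (0 : ℝ)) (b := 10)).prod (isCompact_Icc (a := (0 : ℝ)) (b := 1)))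
    (by simp)).comp_tendsto (k := fun x : ℝ × ℝ × ℝ => (x.1, sin x.2.2 ^ 2))
    (tendsto_principal_principal.2 fun x hx => ⟨Ioc_subset_Icc_self hx.1, sin_sq_mem_Icc _⟩)

lemma isBigO_angularFun (P : ℝ[X][X]) :
    (fun x : ℝ × ℝ × ℝ => angularFun P x.1 x.2.2) =O[𝓟 (Ioc 0 10 ×ˢ Qdom)] fun _ => (1 : ℝ) := by
  have hΓ : (fun x : ℝ × ℝ × ℝ => Γf x.1 x.2.2) =O[𝓟 (Ioc 0 10 ×ˢ Qdom)] fun _ => (1 : ℝ) := by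
    refine isBigO_principal.2 ⟨1, fun x hx => ?_⟩
    simpa [abs_of_nonneg (Γf_nonneg hx.2.2)] using Γf_le_one hx.1.1.le hx.2.2
  simpa only [mul_one, angularFun] using (isBigO_evalEval_sin_sq P).mul hΓ

lemma angularWeight_mul_angularFun_C_X_mul_X_mem_Icc (hα : α ∈ Ioc 0 10)
    (hβ : β ∈ Ioo 0 (π / 2)) :
    angularWeight α β * angularFun (C X * X) α β ∈ Icc 0 10 := by
  have hα₀ : 0 < α := hα.1
  have hs := sin_two_mul_pos hβ
  have hΓ : 0 ≤ Γf α β := Γf_nonneg hβ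
  have heq : angularWeight α β * angularFun (C X * X) α β =
      α / (α / 10 + sin (2 * β)) * (sin (2 * β) ^ (-(α / 5)) * (sin β ^ 2 * Γf α β)) := by
    rw [angularFun_C_X_mul, angularWeight, angularFun, evalEval_X]
    ring
  have hquot : α / (α / 10 + sin (2 * β)) ≤ 10 := by
    rw [div_le_iff₀ (by positivity)]
    linarith
  rw [heq]
  refine ⟨by positivity, ?_⟩
  simpa only [mul_one] using mul_le_mul hquot
    (sin_two_mul_rpow_mul_sin_sq_mul_Γf_le_one (Ioc_subset_Icc_self hα) hβ)
    (by positivity) (by norm_num)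

lemma angularWeight_mul_angularFun_X_mul_one_sub_X_mem_Icc (hα : α ∈ Ioc 0 10)
    (hβ : β ∈ Ioo 0 (π / 2)) :
    angularWeight α β * angularFun (X * (1 - X)) α β ∈ Icc 0 1 := by
  have hα₀ : 0 < α := hα.1
  have hs := sin_two_mul_pos hβ
  have hΓ : 0 ≤ Γf α β := Γf_nonneg hβ
  have heq : angularWeight α β * angularFun (X * (1 - X)) α β =
      sin (2 * β) ^ (-(α / 5)) * (sin β ^ 2 * cos β ^ 2 * Γf α β) / (α / 10 + sin (2 * β)) := by
    rw [angularWeight, angularFun, evalEval_mul, evalEval_sub, evalEval_one, evalEval_X, cos_sq']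
    ring
  rw [heq]
  refine ⟨by positivity, (div_le_one (by positivity)).2 ?_⟩
  exact sin_two_mul_rpow_mul_sin_sq_mul_cos_sq_mul_Γf_le (Ioc_subset_Icc_self hα) hβ

lemma isBigO_angularWeight_mul_angularFun {P : ℝ[X][X]} (hP : P ∈ weightIdeal) :
    (fun x : ℝ × ℝ × ℝ => angularWeight x.1 x.2.2 * angularFun P x.1 x.2.2)
      =O[𝓟 (Ioc 0 10 ×ˢ Qdom)] fun _ => (1 : ℝ) := by
  induction hP using Submodule.span_induction with
  | mem P hP =>
    rcases hP with rfl | rfl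
    · refine isBigO_principal.2 ⟨10, fun x hx => ?_⟩
      have hmem := angularWeight_mul_angularFun_C_X_mul_X_mem_Icc hx.1 hx.2.2
      simpa only [Real.norm_of_nonneg hmem.1, norm_one, mul_one] using hmem.2
    · refine isBigO_principal.2 ⟨1, fun x hx => ?_⟩
      have hmem := angularWeight_mul_angularFun_X_mul_one_sub_X_mem_Icc hx.1 hx.2.2
      simpa only [Real.norm_of_nonneg hmem.1, norm_one, mul_one] using hmem.2
  | zero => simpa only [angularFun, evalEval_zero, zero_mul, mul_zero] using isBigO_zero _ _
  | add P Q _ _ hP hQ =>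
    simpa only [angularFun, evalEval_add, add_mul, mul_add] using hP.add hQ
  | smul Q P _ hP =>
    simpa only [smul_eq_mul, mul_comm Q P, angularFun_mul, mul_left_comm, mul_one]
      using (isBigO_evalEval_sin_sq Q).mul hP

end AngularWeight

section Profiles

variable {K : ℝ → ℝ} {p : ℝ[X]} {f : ℝ → ℝ → ℝ → ℝ}

lemma IsProfile.isBigOW_Dbeta_iterate {S : Set ℝ} {b : ℝ → ℝ} (hf : IsProfile K p f) (m : ℕ)
    (hfun : (fun x : ℝ × ℝ × ℝ => angularFun (angularDeriv^[m] 1) x.1 x.2.2)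
      =O[𝓟 (S ×ˢ Qdom)] fun x => b x.1)
    (hweight : ∀ j, (fun x : ℝ × ℝ × ℝ => angularWeight x.1 x.2.2 *
      angularFun (angularDeriv^[j + 1 + m] 1) x.1 x.2.2) =O[𝓟 (S ×ˢ Qdom)] fun x => b x.1) :
    IsBigOW S (fun α => Dbeta^[m] (f α)) (fun α => K α * b α) := by
  have hradial (k : ℕ) : (fun x : ℝ × ℝ × ℝ => K x.1 *
      (radialDeriv^[k] p).eval (1 / (1 + x.2.1))) =O[𝓟 (S ×ˢ Qdom)] fun x => K x.1 := by
    simpa only [mul_one] using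
      (isBigO_refl (fun x : ℝ × ℝ × ℝ => K x.1) _).mul (isBigO_eval_inv_one_add _ S)
  refine ⟨fun k => ((hradial k).mul hfun).congr' ?_ .rfl,
    fun k j => ((hradial k).mul (hweight j)).congr' ?_ .rfl⟩
  · refine eventuallyEq_principal.2 fun x hx => ?_
    simpa only [div_one] using
      (hf.DR_iterate_Dbeta_iterate_div (fun _ => 1) k m x.1 hx.2.1 hx.2.2).symm
  · refine eventuallyEq_principal.2 fun x hx => ?_
    simp only [← Function.iterate_add_apply]
    rw [hf.DR_iterate_Dbeta_iterate_div (fun β => x.1 / 10 + sin (2 * β)) k (j + 1 + m) x.1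
      hx.2.1 hx.2.2, angularWeight]
    ring

lemma IsProfile.isBigOW (hf : IsProfile K p f) : IsBigOW (Ioc 0 10) f K := by
  simpa only [mul_one, Function.iterate_zero_apply] using
    hf.isBigOW_Dbeta_iterate (b := fun _ => 1) 0 (isBigO_angularFun _) fun j =>
      isBigO_angularWeight_mul_angularFun (angularDeriv_iterate_succ_one_mem_weightIdeal j)

lemma IsProfile.isBigOW_Dbeta (hf : IsProfile K p f) :
    IsBigOW (Ioc 0 10) (fun α => Dbeta (f α)) (fun α => K α * α) := by
  have hα := isBigO_refl (fun x : ℝ × ℝ × ℝ => x.1) (𝓟 (Ioc 0 10 ×ˢ Qdom))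
  refine hf.isBigOW_Dbeta_iterate (b := fun α => α) 1 ?_ fun j => ?_
  · obtain ⟨Q, hQ⟩ := exists_angularDeriv_iterate_succ_one 0
    simpa only [hQ, angularFun_C_X_mul, mul_one] using hα.mul (isBigO_angularFun (X * Q))
  · obtain ⟨P, hP, hiter⟩ := exists_mem_weightIdeal_angularDeriv_iterate_add_two_one j
    simpa only [hiter, angularFun_C_X_mul, mul_left_comm, mul_one]
      using hα.mul (isBigO_angularWeight_mul_angularFun hP)

lemma isProfile_Γf : IsProfile (fun _ => 1) 1 (fun α _ β => Γf α β) := by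
  intro α R _ β _
  simp

lemma isProfile_Ωbar : IsProfile (fun α => α / cst α) (3 * (X - X ^ 2)) Ωbar := by
  intro α R (hR : 0 < R) β _
  simp only [Ωbar, eval_mul, eval_sub, eval_pow, eval_X, eval_ofNat]
  field_simp
  ring

lemma isProfile_ηbar : IsProfile (fun α => α / cst α) (6 * (X ^ 2 - X ^ 3)) ηbar := by
  intro α R (hR : 0 < R) β _
  simp only [ηbar, eval_mul, eval_sub, eval_pow, eval_X, eval_ofNat]
  field_simp
  ring

lemma isProfile_weighted_Ωbar :
    IsProfile (fun α => α / cst α) 3 (fun α R β => (1 + R) ^ 2 / R * Ωbar α R β) := by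
  intro α R (hR : 0 < R) β _
  simp only [Ωbar, eval_ofNat]
  field_simp

lemma isProfile_weighted_ηbar :
    IsProfile (fun α => α / cst α) (6 * X) (fun α R β => (1 + R) ^ 2 / R * ηbar α R β) := by
  intro α R (hR : 0 < R) β _
  simp only [ηbar, eval_mul, eval_X, eval_ofNat]
  field_simp

lemma cst_eq {α : ℝ} (hα : -1 < α) : cst α = 4 / (π * (α + 2)) := by
  have hexp : α + 2 ≠ 0 := by linarith
  have hderiv (β : ℝ) : HasDerivAt (fun b => -(2 / (α + 2)) * cos b ^ (α + 2))
      (2 * sin β * cos β ^ (α + 1)) β := by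
    have hpow := (hasDerivAt_cos β).rpow_const (p := α + 2) (Or.inr (by linarith))
    refine (hpow.const_mul (-(2 / (α + 2)))).congr_deriv ?_
    rw [show α + 2 - 1 = α + 1 by ring]
    field_simp
  have hcont : Continuous fun β => 2 * sin β * cos β ^ (α + 1) :=
    (by fun_prop : Continuous fun β => 2 * sin β).mul
      (continuous_cos.rpow_const fun _ => Or.inr (by linarith))
  have hintegrand : ∀ β ∈ Ioo (0 : ℝ) (π / 2),
      Γf α β * sin (2 * β) = 2 * sin β * cos β ^ (α + 1) := by
    intro β hβ
    rw [Γf, sin_two_mul, rpow_add_one (cos_pos_of_mem_Ioo_zero hβ).ne']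
    ring
  rw [cst, setIntegral_congr_fun measurableSet_Ioo hintegrand, ← integral_Ioc_eq_integral_Ioo,
    ← intervalIntegral.integral_of_le pi_div_two_pos.le,
    intervalIntegral.integral_eq_sub_of_hasDerivAt (fun β _ => hderiv β)
      (hcont.intervalIntegrable _ _)]
  simp only [cos_pi_div_two, zero_rpow hexp, cos_zero, one_rpow]
  field_simp
  ring

lemma isBigO_div_cst : (fun α => α / cst α) =O[𝓟 (Ioc 0 10)] fun α => α := by
  refine isBigO_principal.2 ⟨3 * π, fun α ⟨hα, hα'⟩ => ?_⟩
  rw [cst_eq (by linarith), Real.norm_of_nonneg (by positivity), Real.norm_of_nonneg hα.le]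
  rw [div_div_eq_mul_div, div_le_iff₀ (by norm_num)]
  nlinarith [mul_pos hα pi_pos]

lemma IsProfile.wnorm_isBigO (hf : IsProfile (fun α => α / cst α) p f) (l : ℕ) :
    (fun α => Wnorm α l (f α)) =O[𝓟 (Ioc 0 10)] fun α => α :=
  (hf.isBigOW.wnorm l).trans isBigO_div_cst

lemma IsProfile.wnorm_Dbeta_isBigO (hf : IsProfile (fun α => α / cst α) p f) (l : ℕ) :
    (fun α => Wnorm α l (Dbeta (f α))) =O[𝓟 (Ioc 0 10)] fun α => α ^ 2 := by
  simpa only [sq] using (hf.isBigOW_Dbeta.wnorm l).trans (isBigO_div_cst.mul (isBigO_refl _ _))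

end Profiles

theorem profiles_in_W7infty_general (l : ℕ) :
    ∃ C : ℝ, ∀ α : ℝ, 0 < α → α ≤ 10 →
      WFin α l (fun _ β => Γf α β) ∧ WFin α l (Ωbar α) ∧ WFin α l (ηbar α) ∧
      Wnorm α l (fun _ β => Γf α β) ≤ C ∧
      Wnorm α l (fun R β => (1+R)^2/R * Ωbar α R β)
          + Wnorm α l (fun R β => (1+R)^2/R * ηbar α R β) ≤ C * α ∧
      Wnorm α l (Dbeta (Ωbar α)) + Wnorm α l (Dbeta (ηbar α)) ≤ C * α^2 := by
  have hΓ := isProfile_Γf.isBigOW.wnorm l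
  have hprofiles := (isProfile_weighted_Ωbar.wnorm_isBigO l).add
    (isProfile_weighted_ηbar.wnorm_isBigO l)
  have hDbeta := (isProfile_Ωbar.wnorm_Dbeta_isBigO l).add (isProfile_ηbar.wnorm_Dbeta_isBigO l)
  rw [isBigO_iff_eventually] at hΓ hprofiles hDbeta
  obtain ⟨C, hCΓ, hCprofiles, hCDbeta⟩ := (hΓ.and (hprofiles.and hDbeta)).exists
  rw [eventually_principal] at hCΓ hCprofiles hCDbeta
  refine ⟨C, fun α hα₀ hα₁ => ?_⟩
  have hα : α ∈ Ioc (0 : ℝ) 10 := ⟨hα₀, hα₁⟩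
  refine ⟨isProfile_Γf.isBigOW.wFin l hα, isProfile_Ωbar.isBigOW.wFin l hα,
    isProfile_ηbar.isBigOW.wFin l hα, ?_, ?_, ?_⟩
  · simpa using (le_abs_self _).trans (hCΓ α hα)
  · simpa [abs_of_pos hα₀] using (le_abs_self _).trans (hCprofiles α hα)
  · simpa using (le_abs_self _).trans (hCDbeta α hα)

/-- `Γ, Ω̄, η̄` belong to `W^{7,∞}`, with quantitative bounds. -/
theorem profiles_in_W7infty :
    ∃ C : ℝ, ∀ α : ℝ, 0 < α → α ≤ 1/1000 →
      WFin α 7 (fun _ β => Γf α β) ∧ WFin α 7 (Ωbar α) ∧ WFin α 7 (ηbar α) ∧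
      Wnorm α 7 (fun _ β => Γf α β) ≤ C ∧
      Wnorm α 7 (fun R β => (1+R)^2/R * Ωbar α R β)
          + Wnorm α 7 (fun R β => (1+R)^2/R * ηbar α R β) ≤ C * α ∧
      Wnorm α 7 (Dbeta (Ωbar α)) + Wnorm α 7 (Dbeta (ηbar α)) ≤ C * α^2 := by
  obtain ⟨C, hC⟩ := profiles_in_W7infty_general 7
  exact ⟨C, fun α hα₀ hα₁ => hC α hα₀ (by linarith)⟩

end Paper
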